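/- arXiv:1406.6404 — 6 statements merged into one kernel-verified Lean document; each statement's English description precedes it below -/
import Mathlib

section
/- Let K be a separable real Hilbert space, let V be a strongly positive self-adjoint bounded linear operator on K, and let R: K → K be such that V^{1/2} R V^{1/2} is ϑ-cocoercive for some ϑ > 0. Then V R is ϑ-cocoercive for the inner product ⟨u, w⟩_{V^{-1}} = ⟨u, V^{-1} w⟩; that is, for all z, z' ∈ K, ⟨z − z', V R z − V R z'⟩_{V^{-1}} ≥ ϑ ‖V R z − V R z'‖²_{V^{-1}}. -/
open scoped RealInnerProductSpace

/-- A bounded linear operator on a real Hilbert space is strongly positive self-adjoint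
if it is self-adjoint and there is `α > 0` with `⟪x, V x⟫ ≥ α ‖x‖²` for all `x`. -/
def IsSPSA {K : Type*} [NormedAddCommGroup K] [InnerProductSpace ℝ K]
    (V : K →L[ℝ] K) : Prop :=
  (∀ x y : K, ⟪V x, y⟫ = ⟪x, V y⟫) ∧ ∃ α : ℝ, 0 < α ∧ ∀ x : K, α * ‖x‖ ^ 2 ≤ ⟪x, V x⟫

/-- `B` is `β`-cocoercive. -/
def Cocoercive {K : Type*} [NormedAddCommGroup K] [InnerProductSpace ℝ K]
    (β : ℝ) (B : K → K) : Prop :=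
  ∀ x y : K, β * ‖B x - B y‖ ^ 2 ≤ ⟪x - y, B x - B y⟫

/-!
Write `V = L L*`; for the theorem, `L = L* = V^{1/2}`. Every `z` is `L x` with `x = L* V⁻¹ z`, and
with `w = R z - R z'` one has `⟪x - x', L* w⟫ = ⟪z - z', w⟫` and `‖L* w‖² = ⟪w, V w⟫`. Hence
cocoercivity of `L* R L` reads `ϑ ⟪w, V w⟫ ≤ ⟪z - z', w⟫`, where `w = V⁻¹ (V R z - V R z')`.
-/

section FormalAdjoint

variable {H K : Type*} [NormedAddCommGroup H] [InnerProductSpace ℝ H]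
  [NormedAddCommGroup K] [InnerProductSpace ℝ K] {L : H →ₗ[ℝ] K} {Ladj : K →ₗ[ℝ] H}

theorem norm_sq_formalAdjoint_apply (hadj : ∀ (x : H) (y : K), ⟪L x, y⟫ = ⟪x, Ladj y⟫) (w : K) :
    ‖Ladj w‖ ^ 2 = ⟪w, L (Ladj w)⟫ := by
  rw [real_inner_comm, hadj, real_inner_self_eq_norm_sq]

theorem Cocoercive.mul_inner_le_inner_of_formalAdjoint_comp
    (hadj : ∀ (x : H) (y : K), ⟪L x, y⟫ = ⟪x, Ladj y⟫) {R : K → K} {ϑ : ℝ}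
    (hcoco : Cocoercive ϑ (fun x => Ladj (R (L x)))) (x x' : H) :
    ϑ * ⟪R (L x) - R (L x'), L (Ladj (R (L x) - R (L x')))⟫
      ≤ ⟪L x - L x', R (L x) - R (L x')⟫ := by
  calc ϑ * ⟪R (L x) - R (L x'), L (Ladj (R (L x) - R (L x')))⟫
      = ϑ * ‖Ladj (R (L x)) - Ladj (R (L x'))‖ ^ 2 := by
        rw [← norm_sq_formalAdjoint_apply hadj, map_sub]
    _ ≤ ⟪x - x', Ladj (R (L x)) - Ladj (R (L x'))⟫ := hcoco x x'
    _ = ⟪L x - L x', R (L x) - R (L x')⟫ := by rw [← map_sub, ← hadj, map_sub]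

theorem stmt_1_general (V : K ≃ₗ[ℝ] K) (hadj : ∀ (x : H) (y : K), ⟪L x, y⟫ = ⟪x, Ladj y⟫)
    (hV : ∀ y : K, L (Ladj y) = V y) {R : K → K} {ϑ : ℝ}
    (hcoco : Cocoercive ϑ (fun x => Ladj (R (L x)))) (z z' : K) :
    ϑ * ⟪V (R z) - V (R z'), V.symm (V (R z) - V (R z'))⟫
      ≤ ⟪z - z', V.symm (V (R z) - V (R z'))⟫ := by
  have hpreimage (y : K) : L (Ladj (V.symm y)) = y := by rw [hV, V.apply_symm_apply]
  have hineq := hcoco.mul_inner_le_inner_of_formalAdjoint_comp hadj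
    (Ladj (V.symm z)) (Ladj (V.symm z'))
  rw [hpreimage, hpreimage, hV, real_inner_comm] at hineq
  rwa [← map_sub, V.symm_apply_apply]

end FormalAdjoint

/-- if `V^{1/2} R V^{1/2}` is `ϑ`-cocoercive, then `V R` is `ϑ`-cocoercive
for the inner product `⟪u, w⟫_{V⁻¹} = ⟪u, V⁻¹ w⟫`. -/
theorem stmt_1
    {K : Type*} [NormedAddCommGroup K] [InnerProductSpace ℝ K] [CompleteSpace K]
    [TopologicalSpace.SeparableSpace K]
    (V Vhalf Vinv : K →L[ℝ] K)
    (hV : IsSPSA V) (hVhalfSPSA : IsSPSA Vhalf)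
    (hVhalf : ∀ x : K, Vhalf (Vhalf x) = V x)
    (hVinv : ∀ x : K, V (Vinv x) = x) (hVinv' : ∀ x : K, Vinv (V x) = x)
    (R : K → K) (ϑ : ℝ) (hϑ : 0 < ϑ)
    (hcoco : Cocoercive ϑ (fun x => Vhalf (R (Vhalf x)))) :
    ∀ z z' : K,
      ϑ * ⟪V (R z) - V (R z'), Vinv (V (R z) - V (R z'))⟫
        ≤ ⟪z - z', Vinv (V (R z) - V (R z'))⟫ :=
  stmt_1_general (L := Vhalf.toLinearMap) (Ladj := Vhalf.toLinearMap)
    (ContinuousLinearEquiv.equivOfInverse V Vinv hVinv' hVinv).toLinearEquiv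
    hVhalfSPSA.1 hVhalf hcoco
end

section
/- Let K and K̃ be separable real Hilbert spaces, let L ∈ B(K, K̃), let R̃: K̃ → K̃ be ϑ̃-cocoercive with ϑ̃ > 0, and set R = L* R̃ L: K → K. Let V be a strongly positive self-adjoint bounded linear operator on K and let ϑ > 0 be such that ϑ · ‖L V L*‖ = ϑ̃. Then V^{1/2} R V^{1/2} is ϑ-cocoercive. -/
open scoped RealInnerProductSpace

/-!
For a bounded operator `M`, the operator `M† B M` inherits cocoercivity from `B`: moving `M†` across
the inner product turns `⟪x - y, M† B M x - M† B M y⟫` into the cocoercivity pairing of `B` at `M x`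
and `M y`, and passing from `B` to `M† B` costs a factor `‖M†‖² = ‖M‖²`. Taking `M = L S` with
`S S† = V`, the C⋆-identity evaluates this factor as `‖M‖² = ‖M M†‖ = ‖L V L†‖`.
-/

section

open scoped InnerProduct

variable {H K Kt : Type*}
  [NormedAddCommGroup H] [InnerProductSpace ℝ H] [CompleteSpace H]
  [NormedAddCommGroup K] [InnerProductSpace ℝ K] [CompleteSpace K]
  [NormedAddCommGroup Kt] [InnerProductSpace ℝ Kt] [CompleteSpace Kt]

theorem IsSPSA.adjoint_eq {V : K →L[ℝ] K} (hV : IsSPSA V) : V† = V :=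
  ((ContinuousLinearMap.eq_adjoint_iff V V).2 hV.1).symm

theorem Cocoercive.adjoint_comp_comp {B : Kt → Kt} {β γ : ℝ} (hB : Cocoercive γ B)
    (M : K →L[ℝ] Kt) (hβ : 0 ≤ β) (hM : β * ‖M‖ ^ 2 ≤ γ) :
    Cocoercive β (fun x => (M†) (B (M x))) := by
  intro x y
  set d := B (M x) - B (M y)
  have norm_adjoint_apply_le : ‖(M†) d‖ ≤ ‖M‖ * ‖d‖ := by
    simpa only [LinearIsometryEquiv.norm_map] using (M†).le_opNorm d
  calc β * ‖(M†) (B (M x)) - (M†) (B (M y))‖ ^ 2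
      = β * ‖(M†) d‖ ^ 2 := by rw [← map_sub]
    _ ≤ β * (‖M‖ * ‖d‖) ^ 2 := by gcongr
    _ = β * ‖M‖ ^ 2 * ‖d‖ ^ 2 := by ring
    _ ≤ γ * ‖d‖ ^ 2 := by gcongr
    _ ≤ ⟪M x - M y, d⟫ := hB (M x) (M y)
    _ = ⟪x - y, (M†) (B (M x)) - (M†) (B (M y))⟫ := by
      rw [← map_sub, ← map_sub, ContinuousLinearMap.adjoint_inner_right]

theorem norm_comp_sq_eq_norm_comp_comp_adjoint (L : K →L[ℝ] Kt) (S : H →L[ℝ] K) :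
    ‖L ∘L S‖ ^ 2 = ‖L ∘L (S ∘L S†) ∘L L†‖ := by
  have cstar_identity := ContinuousLinearMap.norm_adjoint_comp_self ((L ∘L S)†)
  rw [ContinuousLinearMap.adjoint_adjoint, LinearIsometryEquiv.norm_map,
    ContinuousLinearMap.adjoint_comp] at cstar_identity
  rw [sq, ← cstar_identity]
  rfl

theorem stmt_2_general (L : K →L[ℝ] Kt) {Rt : Kt → Kt} {ϑt : ℝ} (hRt : Cocoercive ϑt Rt)
    {V : K →L[ℝ] K} {S : H →L[ℝ] K} (hS : S ∘L S† = V)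
    {ϑ : ℝ} (hϑ : 0 ≤ ϑ) (hnorm : ϑ * ‖L ∘L V ∘L L†‖ ≤ ϑt) :
    Cocoercive ϑ (fun x => (S†) ((L†) (Rt (L (S x))))) := by
  rw [← hS, ← norm_comp_sq_eq_norm_comp_comp_adjoint] at hnorm
  simpa only [ContinuousLinearMap.adjoint_comp, ContinuousLinearMap.comp_apply] using
    hRt.adjoint_comp_comp (L ∘L S) hϑ hnorm

end

/-- with `R = L* R̃ L` for `R̃` a `ϑ̃`-cocoercive operator, and `V` strongly
positive self-adjoint with `ϑ ‖L V L*‖ = ϑ̃`, the operator `V^{1/2} R V^{1/2}` is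
`ϑ`-cocoercive. -/
theorem stmt_2
    {K : Type*} [NormedAddCommGroup K] [InnerProductSpace ℝ K] [CompleteSpace K]
    [TopologicalSpace.SeparableSpace K]
    {Kt : Type*} [NormedAddCommGroup Kt] [InnerProductSpace ℝ Kt] [CompleteSpace Kt]
    [TopologicalSpace.SeparableSpace Kt]
    (L : K →L[ℝ] Kt)
    (Rt : Kt → Kt) (ϑt : ℝ) (hϑt : 0 < ϑt) (hRt : Cocoercive ϑt Rt)
    (V Vhalf : K →L[ℝ] K) (hV : IsSPSA V) (hVhalfSPSA : IsSPSA Vhalf)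
    (hVhalf : ∀ x : K, Vhalf (Vhalf x) = V x)
    (ϑ : ℝ) (hϑ : 0 < ϑ)
    (hnorm : ϑ * ‖L.comp (V.comp (ContinuousLinearMap.adjoint L))‖ = ϑt) :
    Cocoercive ϑ
      (fun x => Vhalf (ContinuousLinearMap.adjoint L (Rt (L (Vhalf x))))) := by
  have sqrt_comp_adjoint : Vhalf.comp (ContinuousLinearMap.adjoint Vhalf) = V := by
    rw [hVhalfSPSA.adjoint_eq]
    exact ContinuousLinearMap.ext hVhalf
  simpa only [hVhalfSPSA.adjoint_eq] using stmt_2_general L hRt sqrt_comp_adjoint hϑ.le hnorm.le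
end

section
/- Let H and G be separable real Hilbert spaces, let L ∈ B(H, G), and let W ∈ B(H), U ∈ B(G) be strongly positive self-adjoint operators with ‖U^{1/2} L W^{1/2}‖ < 1. Let C: H → H and let D: G → 2^G have single-valued inverse D^{-1}: G → G, set R: H ⊕ G → H ⊕ G: (x, v) ↦ (C x, D^{-1} v), and let V be the strongly positive self-adjoint operator V(x, v) = ((W^{-1} − L* U L)^{-1} x + W L* (U^{-1} − L W L*)^{-1} v, (U^{-1} − L W L*)^{-1} (L W x + v)). If W^{1/2} C W^{1/2} is μ-cocoercive with μ > 0 and U^{1/2} D^{-1} U^{1/2} is ν-cocoercive with ν > 0, then for every α > 0, V^{1/2} R V^{1/2} is ϑ_α-cocoercive, where ϑ_α = (1 − ‖U^{1/2} L W^{1/2}‖²) · min{ μ (1 + α‖U^{1/2} L W^{1/2}‖)^{-1}, ν (1 + α^{-1}‖U^{1/2} L W^{1/2}‖)^{-1} }. -/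
open scoped RealInnerProductSpace

/-! Everything is measured in weighted inner products: for symmetric `P`, the map `P ∘ B ∘ P` is
`β`-cocoercive as soon as `β ⟪Bx - By, P²(Bx - By)⟫ ≤ ⟪x - y, Bx - By⟫`, and conversely when `P` is
onto. The claim is therefore a bound of the quadratic form of `V` by those of `W` and `U`.

The pair `(y, w) = V (c, d)` solves the saddle system `y = W (c + L* w)`, `w = U (d + L y)`. With
`M = U^{1/2} L W^{1/2}`, `a = W^{1/2} c`, `b = U^{1/2} d`, `y = W^{1/2} η` and `w = U^{1/2} ω`, it
reads `η = a + M* ω`, `ω = b + M η`, and `⟪(c, d), V (c, d)⟫ = ⟪a, η⟫ + ⟪b, ω⟫`. Eliminating `ω`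
gives `(1 - M* M) η = a + M* b`, where `1 - M* M ≥ 1 - ‖M‖²`; this bounds `⟪a, η⟫ + ⟪b, ω⟫` by
`(1 - ‖M‖²)⁻¹ (‖a‖² + 2 ‖M‖ ‖a‖ ‖b‖ + ‖b‖²)`, and Young's inequality splits the cross term. -/

section WeightedCocoercivity

variable {K : Type*} [NormedAddCommGroup K] [InnerProductSpace ℝ K]

/-- `B` is `β`-cocoercive with respect to the quadratic form `x ↦ ⟪x, A x⟫`, that is,
`β ‖B x - B y‖²_A ≤ ⟪x - y, B x - B y⟫`. It expresses cocoercivity of `A^{1/2} B A^{1/2}` without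
the square root; only the left-hand side is weighted. -/
def WeightedCocoercive (β : ℝ) (A B : K → K) : Prop :=
  ∀ x y : K, β * ⟪B x - B y, A (B x - B y)⟫ ≤ ⟪x - y, B x - B y⟫

variable {P : K →ₗ[ℝ] K} {A : K → K}

theorem inner_apply_eq_norm_sq_of_sqrt (hP : P.IsSymmetric) (hPA : ∀ x, P (P x) = A x) (x : K) :
    ⟪x, A x⟫ = ‖P x‖ ^ 2 := by
  rw [← hPA, ← hP, real_inner_self_eq_norm_sq]

variable {β : ℝ} {B : K → K}

theorem WeightedCocoercive.conj_sqrt (hB : WeightedCocoercive β A B) (hP : P.IsSymmetric)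
    (hPA : ∀ x, P (P x) = A x) : Cocoercive β (fun x => P (B (P x))) := by
  intro x y
  have h := hB (P x) (P y)
  rwa [inner_apply_eq_norm_sq_of_sqrt hP hPA, ← map_sub P x, hP, map_sub P (B (P x))] at h

theorem Cocoercive.weighted_of_conj_sqrt (hB : Cocoercive β (fun x => P (B (P x))))
    (hP : P.IsSymmetric) (hPA : ∀ x, P (P x) = A x) (hA : Function.Surjective A) :
    WeightedCocoercive β A B := by
  have hP_surj : Function.Surjective P := fun x => by
    obtain ⟨y, rfl⟩ := hA x
    exact ⟨P y, hPA y⟩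
  intro x y
  obtain ⟨x, rfl⟩ := hP_surj x
  obtain ⟨y, rfl⟩ := hP_surj y
  have h := hB x y
  simp only [← map_sub] at h
  rwa [← hP, ← inner_apply_eq_norm_sq_of_sqrt hP hPA, map_sub P x] at h

end WeightedCocoercivity

section BlockInverse

variable {R H G : Type*} [Ring R] [AddCommGroup H] [Module R H] [AddCommGroup G] [Module R G]
  {L : H →ₗ[R] G} {L' : G →ₗ[R] H} {W : H →ₗ[R] H} {Winv T : H → H}
  {U S : G →ₗ[R] G} {Uinv : G → G}

theorem apply_eq_sub_of_schur_rightInverse (hW : ∀ x, W (Winv x) = x)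
    (hT : ∀ x, Winv (T x) - L' (U (L (T x))) = x) (x : H) :
    W x = T x - W (L' (U (L (T x)))) := by
  conv_lhs => rw [← hT x, map_sub, hW]

theorem schur_push_through (hW : ∀ x, W (Winv x) = x) (hU : ∀ v, Uinv (U v) = v)
    (hT : ∀ x, Winv (T x) - L' (U (L (T x))) = x)
    (hS : ∀ v, S (Uinv v - L (W (L' v))) = v) (x : H) :
    S (L (W x)) = U (L (T x)) := by
  rw [apply_eq_sub_of_schur_rightInverse hW hT, map_sub]
  simpa only [hU] using hS (U (L (T x)))

theorem block_inverse_solves_saddle_system (hW : ∀ x, W (Winv x) = x)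
    (hU : ∀ v, U (Uinv v) = v) (hU' : ∀ v, Uinv (U v) = v)
    (hT : ∀ x, Winv (T x) - L' (U (L (T x))) = x)
    (hS : ∀ v, Uinv (S v) - L (W (L' (S v))) = v)
    (hS' : ∀ v, S (Uinv v - L (W (L' v))) = v) {c y : H} {d w : G}
    (hy : y = T c + W (L' (S d))) (hw : w = S (L (W c) + d)) :
    y = W (c + L' w) ∧ w = U (d + L y) := by
  have hw_eq : w = U (L (T c)) + S d := by
    rw [hw, map_add, schur_push_through hW hU' hT hS']
  constructor
  · rw [hy, hw_eq, map_add L', map_add W, map_add W,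
      apply_eq_sub_of_schur_rightInverse hW hT c]
    abel
  · rw [hy, hw_eq, map_add L, map_add U, map_add U,
      apply_eq_sub_of_schur_rightInverse (L := L') (L' := L) hU hS d]
    abel

end BlockInverse

theorem mul_le_sq_of_mul_sq_le_of_le_mul {c g s t : ℝ} (hc : 0 ≤ c) (hlower : c * t ^ 2 ≤ s)
    (hupper : s ≤ g * t) : c * s ≤ g ^ 2 := by
  nlinarith [sq_nonneg (g - c * t), mul_le_mul_of_nonneg_left hlower hc,
    mul_le_mul_of_nonneg_left hupper hc]

section

variable {H G : Type*} [NormedAddCommGroup H] [InnerProductSpace ℝ H]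
  [NormedAddCommGroup G] [InnerProductSpace ℝ G]

theorem saddle_system_mul_inner_le_sq (M : H →L[ℝ] G) {N : G → H}
    (hMN : ∀ x v, ⟪M x, v⟫ = ⟪x, N v⟫) (hM : ‖M‖ ≤ 1) {a η : H} {b ω : G}
    (hη : η = a + N ω) (hω : ω = b + M η) :
    (1 - ‖M‖ ^ 2) * (⟪a, η⟫ + ⟪b, M η⟫) ≤ (‖a‖ + ‖M‖ * ‖b‖) ^ 2 := by
  have hMη : ‖M η‖ ≤ ‖M‖ * ‖η‖ := M.le_opNorm η
  have energy : ‖η‖ ^ 2 = ⟪a, η⟫ + (⟪b, M η⟫ + ‖M η‖ ^ 2) := by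
    calc ‖η‖ ^ 2 = ⟪η, a + N ω⟫ := by rw [← hη, real_inner_self_eq_norm_sq]
      _ = ⟪η, a⟫ + ⟪M η, b + M η⟫ := by rw [inner_add_right, ← hMN, ← hω]
      _ = ⟪a, η⟫ + (⟪b, M η⟫ + ‖M η‖ ^ 2) := by
        rw [inner_add_right, real_inner_self_eq_norm_sq, real_inner_comm, real_inner_comm b]
  apply mul_le_sq_of_mul_sq_le_of_le_mul (t := ‖η‖)
  · nlinarith [norm_nonneg M]
  · nlinarith [pow_le_pow_left₀ (norm_nonneg _) hMη 2]
  · calc ⟪a, η⟫ + ⟪b, M η⟫ ≤ ‖a‖ * ‖η‖ + ‖b‖ * ‖M η‖ :=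
          add_le_add (real_inner_le_norm a η) (real_inner_le_norm b (M η))
      _ ≤ ‖a‖ * ‖η‖ + ‖b‖ * (‖M‖ * ‖η‖) := by gcongr
      _ = (‖a‖ + ‖M‖ * ‖b‖) * ‖η‖ := by ring

theorem saddle_system_mul_inner_le (M : H →L[ℝ] G) {N : G → H}
    (hMN : ∀ x v, ⟪M x, v⟫ = ⟪x, N v⟫) (hM : ‖M‖ ≤ 1) {a η : H} {b ω : G}
    (hη : η = a + N ω) (hω : ω = b + M η) {α : ℝ} (hα : 0 < α) :
    (1 - ‖M‖ ^ 2) * (⟪a, η⟫ + ⟪b, ω⟫) ≤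
      (1 + α * ‖M‖) * ‖a‖ ^ 2 + (1 + α⁻¹ * ‖M‖) * ‖b‖ ^ 2 := by
  have hb : ⟪b, ω⟫ = ‖b‖ ^ 2 + ⟪b, M η⟫ := by
    rw [hω, inner_add_right, real_inner_self_eq_norm_sq]
  calc (1 - ‖M‖ ^ 2) * (⟪a, η⟫ + ⟪b, ω⟫)
      = (1 - ‖M‖ ^ 2) * (⟪a, η⟫ + ⟪b, M η⟫) + (1 - ‖M‖ ^ 2) * ‖b‖ ^ 2 := by rw [hb]; ring
    _ ≤ (‖a‖ + ‖M‖ * ‖b‖) ^ 2 + (1 - ‖M‖ ^ 2) * ‖b‖ ^ 2 := by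
      gcongr
      exact saddle_system_mul_inner_le_sq M hMN hM hη hω
    _ = ‖a‖ ^ 2 + ‖M‖ * (2 * ‖a‖ * ‖b‖) + ‖b‖ ^ 2 := by ring
    _ ≤ ‖a‖ ^ 2 + ‖M‖ * (α * ‖a‖ ^ 2 + α⁻¹ * ‖b‖ ^ 2) + ‖b‖ ^ 2 := by
      gcongr
      exact two_mul_le_add_mul_sq hα
    _ = (1 + α * ‖M‖) * ‖a‖ ^ 2 + (1 + α⁻¹ * ‖M‖) * ‖b‖ ^ 2 := by ring

theorem weighted_saddle_system_mul_inner_le {P : H →L[ℝ] H} {Q : G →L[ℝ] G} {L : H →L[ℝ] G}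
    {L' : G → H} {W : H → H} {U : G → G} (hP : (P : H →ₗ[ℝ] H).IsSymmetric)
    (hQ : (Q : G →ₗ[ℝ] G).IsSymmetric) (hPW : ∀ x, P (P x) = W x) (hQU : ∀ v, Q (Q v) = U v)
    (hL : ∀ x v, ⟪L x, v⟫ = ⟪x, L' v⟫) (hM : ‖Q.comp (L.comp P)‖ ≤ 1) {c y : H} {d w : G}
    (hy : y = W (c + L' w)) (hw : w = U (d + L y)) {α : ℝ} (hα : 0 < α) :
    (1 - ‖Q.comp (L.comp P)‖ ^ 2) * (⟪c, y⟫ + ⟪d, w⟫) ≤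
      (1 + α * ‖Q.comp (L.comp P)‖) * ⟪c, W c⟫ +
        (1 + α⁻¹ * ‖Q.comp (L.comp P)‖) * ⟪d, U d⟫ := by
  set η := P (c + L' w) with hη
  set ω := Q (d + L y) with hω
  have hPη : P η = y := by rw [hη, hPW, hy]
  have hQω : Q ω = w := by rw [hω, hQU, ← hw]
  have hMN (x : H) (v : G) : ⟪Q.comp (L.comp P) x, v⟫ = ⟪x, P (L' (Q v))⟫ := by
    calc ⟪Q (L (P x)), v⟫ = ⟪L (P x), Q v⟫ := hQ _ _
      _ = ⟪P x, L' (Q v)⟫ := hL _ _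
      _ = ⟪x, P (L' (Q v))⟫ := hP _ _
  have hη_eq : η = P c + P (L' (Q ω)) := by rw [hQω, hη, map_add]
  have hω_eq : ω = Q d + Q.comp (L.comp P) η := by
    rw [ContinuousLinearMap.comp_apply, ContinuousLinearMap.comp_apply, hPη, hω, map_add]
  have hcy : ⟪c, y⟫ = ⟪P c, η⟫ := by rw [← hPη]; exact (hP c η).symm
  have hdw : ⟪d, w⟫ = ⟪Q d, ω⟫ := by rw [← hQω]; exact (hQ d ω).symm
  rw [hcy, hdw, inner_apply_eq_norm_sq_of_sqrt hP hPW, inner_apply_eq_norm_sq_of_sqrt hQ hQU]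
  exact saddle_system_mul_inner_le _ hMN hM hη_eq hω_eq hα

theorem WeightedCocoercive.prodMap {W C : H → H} {U D : G → G}
    {V : WithLp 2 (H × G) → WithLp 2 (H × G)} {μ ν κ s t : ℝ}
    (hC : WeightedCocoercive μ W C) (hD : WeightedCocoercive ν U D)
    (hμ : 0 ≤ μ) (hν : 0 ≤ ν) (hs : 0 < s) (ht : 0 < t)
    (hW : ∀ x, 0 ≤ ⟪x, W x⟫) (hU : ∀ v, 0 ≤ ⟪v, U v⟫)
    (hV : ∀ q, κ * ⟪q, V q⟫ ≤ s * ⟪q.fst, W q.fst⟫ + t * ⟪q.snd, U q.snd⟫) :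
    WeightedCocoercive (κ * min (μ * s⁻¹) (ν * t⁻¹)) V
      (fun z => WithLp.toLp 2 (C z.fst, D z.snd)) := by
  intro p p'
  set q := WithLp.toLp 2 (C p.fst, D p.snd) - WithLp.toLp 2 (C p'.fst, D p'.snd)
  set m := min (μ * s⁻¹) (ν * t⁻¹)
  have hm : 0 ≤ m := by positivity
  have hms : m * s ≤ μ := (le_div_iff₀ hs).mp (min_le_left _ _)
  have hmt : m * t ≤ ν := (le_div_iff₀ ht).mp (min_le_right _ _)
  calc κ * m * ⟪q, V q⟫ = m * (κ * ⟪q, V q⟫) := by ring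
    _ ≤ m * (s * ⟪q.fst, W q.fst⟫ + t * ⟪q.snd, U q.snd⟫) :=
      mul_le_mul_of_nonneg_left (hV q) hm
    _ = m * s * ⟪q.fst, W q.fst⟫ + m * t * ⟪q.snd, U q.snd⟫ := by ring
    _ ≤ μ * ⟪q.fst, W q.fst⟫ + ν * ⟪q.snd, U q.snd⟫ :=
      add_le_add (mul_le_mul_of_nonneg_right hms (hW _)) (mul_le_mul_of_nonneg_right hmt (hU _))
    _ ≤ ⟪p.fst - p'.fst, q.fst⟫ + ⟪p.snd - p'.snd, q.snd⟫ :=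
      add_le_add (hC p.fst p'.fst) (hD p.snd p'.snd)
    _ = ⟪p - p', q⟫ := (WithLp.prod_inner_apply (p - p') q).symm

end

theorem stmt_5_general
    {H : Type*} [NormedAddCommGroup H] [InnerProductSpace ℝ H]
    {G : Type*} [NormedAddCommGroup G] [InnerProductSpace ℝ G]
    (L : H →L[ℝ] G) (Ladj : G →L[ℝ] H) (hLadj : ∀ x v, ⟪L x, v⟫ = ⟪x, Ladj v⟫)
    (W Winv Whalf : H →L[ℝ] H) (U Uinv Uhalf : G →L[ℝ] G)
    (hWhalfSymm : (Whalf : H →ₗ[ℝ] H).IsSymmetric) (hUhalfSymm : (Uhalf : G →ₗ[ℝ] G).IsSymmetric)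
    (hWhalf : ∀ x, Whalf (Whalf x) = W x) (hUhalf : ∀ v, Uhalf (Uhalf v) = U v)
    (hWinv : ∀ x, W (Winv x) = x)
    (hUinv : ∀ v, U (Uinv v) = v) (hUinv' : ∀ v, Uinv (U v) = v)
    (hnorm : ‖Uhalf.comp (L.comp Whalf)‖ ≤ 1)
    (C : H → H) (Dinv : G → G) (μ ν : ℝ) (hμ : 0 ≤ μ) (hν : 0 ≤ ν)
    (hC : Cocoercive μ (fun x => Whalf (C (Whalf x))))
    (hD : Cocoercive ν (fun v => Uhalf (Dinv (Uhalf v))))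
    (T : H →L[ℝ] H) (S : G →L[ℝ] G)
    (hT : ∀ x, (Winv - Ladj.comp (U.comp L)) (T x) = x)
    (hS : ∀ v, (Uinv - L.comp (W.comp Ladj)) (S v) = v)
    (hS' : ∀ v, S ((Uinv - L.comp (W.comp Ladj)) v) = v)
    (V Vhalf : WithLp 2 (H × G) →L[ℝ] WithLp 2 (H × G))
    (hV1 : ∀ z, (V z).fst = T z.fst + W (Ladj (S z.snd)))
    (hV2 : ∀ z, (V z).snd = S (L (W z.fst) + z.snd))
    (hVhalfSymm : (Vhalf : WithLp 2 (H × G) →ₗ[ℝ] WithLp 2 (H × G)).IsSymmetric)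
    (hVhalf : ∀ z, Vhalf (Vhalf z) = V z)
    (R : WithLp 2 (H × G) → WithLp 2 (H × G))
    (hR : ∀ z, R z = WithLp.toLp 2 (C z.fst, Dinv z.snd)) (α : ℝ) (hα : 0 < α) :
    Cocoercive
      ((1 - ‖Uhalf.comp (L.comp Whalf)‖ ^ 2) *
        min (μ * (1 + α * ‖Uhalf.comp (L.comp Whalf)‖)⁻¹)
            (ν * (1 + α⁻¹ * ‖Uhalf.comp (L.comp Whalf)‖)⁻¹))
      (fun z => Vhalf (R (Vhalf z))) := by
  obtain rfl : R = fun z => WithLp.toLp 2 (C z.fst, Dinv z.snd) := funext hR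
  have hCW : WeightedCocoercive μ W C :=
    Cocoercive.weighted_of_conj_sqrt hC hWhalfSymm hWhalf fun x => ⟨Winv x, hWinv x⟩
  have hDU : WeightedCocoercive ν U Dinv :=
    Cocoercive.weighted_of_conj_sqrt hD hUhalfSymm hUhalf fun v => ⟨Uinv v, hUinv v⟩
  have saddle (q : WithLp 2 (H × G)) :
      (V q).fst = W (q.fst + Ladj (V q).snd) ∧ (V q).snd = U (q.snd + L (V q).fst) :=
    block_inverse_solves_saddle_system (L := (L : H →ₗ[ℝ] G)) (L' := (Ladj : G →ₗ[ℝ] H))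
      (W := (W : H →ₗ[ℝ] H)) (U := (U : G →ₗ[ℝ] G)) (S := (S : G →ₗ[ℝ] G))
      hWinv hUinv hUinv' hT hS hS' (hV1 q) (hV2 q)
  have hW_nonneg (x : H) : 0 ≤ ⟪x, W x⟫ :=
    (sq_nonneg _).trans_eq (inner_apply_eq_norm_sq_of_sqrt hWhalfSymm hWhalf x).symm
  have hU_nonneg (v : G) : 0 ≤ ⟪v, U v⟫ :=
    (sq_nonneg _).trans_eq (inner_apply_eq_norm_sq_of_sqrt hUhalfSymm hUhalf v).symm
  refine (hCW.prodMap hDU hμ hν (by positivity) (by positivity) hW_nonneg hU_nonneg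
    fun q => ?_).conj_sqrt hVhalfSymm hVhalf
  rw [WithLp.prod_inner_apply]
  exact weighted_saddle_system_mul_inner_le hWhalfSymm hUhalfSymm hWhalf hUhalf hLadj hnorm
    (saddle q).1 (saddle q).2 hα

/-- with `R(x,v) = (Cx, D⁻¹v)` and
`V(x,v) = ((W⁻¹ − L*UL)⁻¹x + WL*(U⁻¹ − LWL*)⁻¹v, (U⁻¹ − LWL*)⁻¹(LWx + v))`, if
`W^{1/2} C W^{1/2}` is `μ`-cocoercive and `U^{1/2} D⁻¹ U^{1/2}` is `ν`-cocoercive, then for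
every `α > 0`, `V^{1/2} R V^{1/2}` is `ϑ_α`-cocoercive. -/
theorem stmt_5
    {H : Type*} [NormedAddCommGroup H] [InnerProductSpace ℝ H] [CompleteSpace H]
    [TopologicalSpace.SeparableSpace H]
    {G : Type*} [NormedAddCommGroup G] [InnerProductSpace ℝ G] [CompleteSpace G]
    [TopologicalSpace.SeparableSpace G]
    (L : H →L[ℝ] G)
    (W Winv Whalf : H →L[ℝ] H) (U Uinv Uhalf : G →L[ℝ] G)
    (hW : IsSPSA W) (hU : IsSPSA U)
    (hWhalfSPSA : IsSPSA Whalf) (hUhalfSPSA : IsSPSA Uhalf)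
    (hWhalf : ∀ x : H, Whalf (Whalf x) = W x) (hUhalf : ∀ v : G, Uhalf (Uhalf v) = U v)
    (hWinv : ∀ x : H, W (Winv x) = x) (hWinv' : ∀ x : H, Winv (W x) = x)
    (hUinv : ∀ v : G, U (Uinv v) = v) (hUinv' : ∀ v : G, Uinv (U v) = v)
    (hnorm : ‖Uhalf.comp (L.comp Whalf)‖ < 1)
    (C : H → H) (D : G → Set G) (Dinv : G → G)
    (hDinv : ∀ u : G, {x : G | u ∈ D x} = {Dinv u})
    (μ ν : ℝ) (hμ : 0 < μ) (hν : 0 < ν)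
    (hC : Cocoercive μ (fun x => Whalf (C (Whalf x))))
    (hD : Cocoercive ν (fun v => Uhalf (Dinv (Uhalf v))))
    -- `T` and `S` are the inverses of `W⁻¹ − L*UL` and `U⁻¹ − LWL*`
    (T : H →L[ℝ] H) (S : G →L[ℝ] G)
    (hT : ∀ x : H, (Winv - (ContinuousLinearMap.adjoint L).comp (U.comp L)) (T x) = x)
    (hT' : ∀ x : H, T ((Winv - (ContinuousLinearMap.adjoint L).comp (U.comp L)) x) = x)
    (hS : ∀ v : G, (Uinv - L.comp (W.comp (ContinuousLinearMap.adjoint L))) (S v) = v)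
    (hS' : ∀ v : G, S ((Uinv - L.comp (W.comp (ContinuousLinearMap.adjoint L))) v) = v)
    (V Vhalf : WithLp 2 (H × G) →L[ℝ] WithLp 2 (H × G))
    (hV1 : ∀ z : WithLp 2 (H × G),
      (WithLp.equiv 2 (H × G) (V z)).1
        = T (WithLp.equiv 2 (H × G) z).1
            + W (ContinuousLinearMap.adjoint L (S (WithLp.equiv 2 (H × G) z).2)))
    (hV2 : ∀ z : WithLp 2 (H × G),
      (WithLp.equiv 2 (H × G) (V z)).2
        = S (L (W (WithLp.equiv 2 (H × G) z).1) + (WithLp.equiv 2 (H × G) z).2))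
    (hVspsa : IsSPSA V) (hVhalfSPSA : IsSPSA Vhalf)
    (hVhalfsq : ∀ z, Vhalf (Vhalf z) = V z)
    (R : WithLp 2 (H × G) → WithLp 2 (H × G))
    (hR : ∀ z : WithLp 2 (H × G),
      R z = (WithLp.equiv 2 (H × G)).symm
        (C (WithLp.equiv 2 (H × G) z).1, Dinv (WithLp.equiv 2 (H × G) z).2)) :
    ∀ α : ℝ, 0 < α →
      Cocoercive
        ((1 - ‖Uhalf.comp (L.comp Whalf)‖ ^ 2) *
          min (μ * (1 + α * ‖Uhalf.comp (L.comp Whalf)‖)⁻¹)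
              (ν * (1 + α⁻¹ * ‖Uhalf.comp (L.comp Whalf)‖)⁻¹))
        (fun z => Vhalf (R (Vhalf z))) := by
  exact stmt_5_general L (ContinuousLinearMap.adjoint L)
    (fun x v => (ContinuousLinearMap.adjoint_inner_right L x v).symm)
    W Winv Whalf U Uinv Uhalf hWhalfSPSA.1 hUhalfSPSA.1 hWhalf hUhalf hWinv hUinv hUinv' hnorm.le
    C Dinv μ ν hμ.le hν.le hC hD T S hT hS hS' V Vhalf hV1 hV2 hVhalfSPSA.1 hVhalfsq R hR
end

section
/- Let μ > 0, ν > 0 and c > 0. The function φ: (0, ∞) → ℝ defined by φ(α) = min{ μ (1 + α c)^{-1}, ν (1 + α^{-1} c)^{-1} } attains its maximum over (0, ∞) at α̂ = ( μ − ν + √((μ − ν)² + 4 μ ν c²) ) / (2 ν c); that is, for every α > 0, φ(α) ≤ φ(α̂). -/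
/-!
The first term of the minimum decreases in `α` and the second increases, so their minimum is
largest where the two agree. Clearing denominators turns that condition into the quadratic equation
`ν c α² + (ν - μ) α - μ c = 0`, and `α̂` is its positive root.
-/

theorem isMaxOn_inf_of_antitoneOn_of_monotoneOn {α β : Type*} [LinearOrder α]
    [SemilatticeInf β] {f g : α → β} {s : Set α} {a : α}
    (hf : AntitoneOn f s) (hg : MonotoneOn g s) (ha : a ∈ s) (hfg : f a = g a) :
    IsMaxOn (fun x ↦ f x ⊓ g x) s a := by
  intro x hx
  change f x ⊓ g x ≤ f a ⊓ g a
  rcases le_total a x with hax | hxa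
  · rw [← hfg, inf_idem]
    exact inf_le_of_left_le (hf ha hx hax)
  · rw [hfg, inf_idem]
    exact inf_le_of_right_le (hg hx ha hxa)

section OrderedField

variable {K : Type*} [Field K] [LinearOrder K] [IsStrictOrderedRing K] {m c : K}

theorem antitoneOn_mul_inv_one_add_mul (hm : 0 ≤ m) (hc : 0 ≤ c) :
    AntitoneOn (fun x ↦ m * (1 + x * c)⁻¹) (Set.Ici 0) := by
  intro x (hx : 0 ≤ x) y _ hxy
  dsimp only
  gcongr

theorem monotoneOn_mul_inv_one_add_inv_mul (hm : 0 ≤ m) (hc : 0 ≤ c) :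
    MonotoneOn (fun x ↦ m * (1 + x⁻¹ * c)⁻¹) (Set.Ioi 0) := by
  intro x (hx : 0 < x) y (hy : 0 < y) hxy
  exact antitoneOn_mul_inv_one_add_mul hm hc (inv_nonneg.2 hy.le) (inv_nonneg.2 hx.le)
    (inv_anti₀ hx hxy)

end OrderedField

theorem mul_inv_one_add_mul_eq_mul_inv_one_add_inv_mul_iff {K : Type*} [Field K] {m n c x : K}
    (hx : x ≠ 0) (h_one_add : 1 + x * c ≠ 0) (h_add : x + c ≠ 0) :
    m * (1 + x * c)⁻¹ = n * (1 + x⁻¹ * c)⁻¹ ↔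
      n * c * (x * x) + (n - m) * x + -(m * c) = 0 := by
  have hinv : (1 + x⁻¹ * c)⁻¹ = x / (x + c) := by
    rw [← inv_div, add_div, div_self hx, inv_mul_eq_div]
  rw [hinv, ← div_eq_mul_inv, mul_div_assoc', div_eq_div_iff h_one_add h_add]
  constructor <;> intro h <;> linear_combination -h

/-- the function `φ(α) = min{ μ/(1 + α c), ν/(1 + c/α) }` on `(0, ∞)` attains
its maximum at `α̂ = (μ − ν + √((μ − ν)² + 4 μ ν c²)) / (2 ν c)`. -/
theorem stmt_7 (μ ν c : ℝ) (hμ : 0 < μ) (hν : 0 < ν) (hc : 0 < c) :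
    ∀ α : ℝ, 0 < α →
      min (μ * (1 + α * c)⁻¹) (ν * (1 + α⁻¹ * c)⁻¹)
        ≤ min (μ * (1 + ((μ - ν + Real.sqrt ((μ - ν) ^ 2 + 4 * μ * ν * c ^ 2)) / (2 * ν * c)) * c)⁻¹)
            (ν * (1 + ((μ - ν + Real.sqrt ((μ - ν) ^ 2 + 4 * μ * ν * c ^ 2)) / (2 * ν * c))⁻¹ * c)⁻¹) := by
  intro α hα
  set s := Real.sqrt ((μ - ν) ^ 2 + 4 * μ * ν * c ^ 2) with hs
  set a := (μ - ν + s) / (2 * ν * c) with ha_def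
  have hs_gt : -s < μ - ν := Real.neg_sqrt_lt_of_sq_lt (lt_add_of_pos_right _ (by positivity))
  have ha : 0 < a := div_pos (by linarith) (by positivity)
  have hdiscrim : discrim (ν * c) (ν - μ) (-(μ * c)) = s * s := by
    rw [hs, Real.mul_self_sqrt (by positivity), discrim]
    ring
  have hroot : ν * c * (a * a) + (ν - μ) * a + -(μ * c) = 0 :=
    (quadratic_eq_zero_iff (by positivity) hdiscrim a).2 <| .inl <| by
      rw [ha_def, neg_sub, mul_assoc]
  have hcross : μ * (1 + a * c)⁻¹ = ν * (1 + a⁻¹ * c)⁻¹ :=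
    (mul_inv_one_add_mul_eq_mul_inv_one_add_inv_mul_iff ha.ne' (by positivity)
      (by positivity)).2 hroot
  exact isMaxOn_inf_of_antitoneOn_of_monotoneOn
    ((antitoneOn_mul_inv_one_add_mul hμ.le hc.le).mono Set.Ioi_subset_Ici_self)
    (monotoneOn_mul_inv_one_add_inv_mul hν.le hc.le) ha hcross hα
end

section
/- Let H and G be separable real Hilbert spaces, let A: H → 2^H and B: G → 2^G be maximally monotone, let C: H → H, let D: G → 2^G have single-valued inverse D^{-1}: G → G, and let L ∈ B(H, G). On K = H ⊕ G define Q(x, v) = (A x + L* v) × (−L x + B^{-1} v) and R(x, v) = (C x, D^{-1} v). Let W ∈ B(H) and U ∈ B(G) be strongly positive self-adjoint with ‖U^{1/2} L W^{1/2}‖ < 1, and let V(x, v) = ((W^{-1} − L* U L)^{-1} x + W L* (U^{-1} − L W L*)^{-1} v, (U^{-1} − L W L*)^{-1} (L W x + v)). Fix z = (x, v) ∈ K and (c, e) ∈ K, and set y = J_{W A}( x − W (L* v + C x + c) ) and u = J_{U B^{-1}}( v + U (L (2y − x) − D^{-1} v + e) ). Then (y, u) = J_{V Q}( z − V R z + s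 ), where s = ( (W^{-1} − L* U L)^{-1} (L* U e − c), (U^{-1} − L W L*)^{-1} (e − L W c) ). -/
open Pointwise
open scoped RealInnerProductSpace

/-- Monotonicity of a set-valued operator. -/
def IsMono {K : Type*} [NormedAddCommGroup K] [InnerProductSpace ℝ K]
    (A : K → Set K) : Prop :=
  ∀ ⦃x y u v : K⦄, u ∈ A x → v ∈ A y → (0 : ℝ) ≤ ⟪x - y, u - v⟫

/-- Maximal monotonicity of a set-valued operator. -/
def IsMaxMono {K : Type*} [NormedAddCommGroup K] [InnerProductSpace ℝ K]
    (A : K → Set K) : Prop :=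
  IsMono A ∧ ∀ B : K → Set K, IsMono B → (∀ x, A x ⊆ B x) → B = A

/-- The set-valued inverse. -/
def svInv {K : Type*} (A : K → Set K) : K → Set K := fun u => {x | u ∈ A x}

/-!
The preconditioner `V` is the inverse of the block operator
`M (x, v) = (W⁻¹ x − L* v, U⁻¹ v − L x)`, by the push-through identity
`(W⁻¹ − L* U L)⁻¹ L* U = W L* (U⁻¹ − L W L*)⁻¹`; the same identity gives `s = V (-c, e)`.
So `z − V (R z) + s ∈ p + V (Q p)` says `M (z − p) ∈ Q p + R z + (c, -e)`. The off-diagonal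
terms `L*` and `L` of `M` combine with those of `Q` to make this system triangular: its first row
is the primal update, its second row the dual one.
-/

section PrimalDual

variable {k H G : Type*} [Ring k] [AddCommGroup H] [Module k H] [AddCommGroup G] [Module k G]

/-- The set-valued operator `Q (x, v) = (A x + L* v) × (−L x + B⁻¹ v)` of the primal-dual inclusion.
The linear map `L'` stands for the adjoint `L*` and `Binv` for the set-valued inverse `B⁻¹`. -/
def primalDualOperator (A : H → Set H) (Binv : G → Set G) (L : H →ₗ[k] G) (L' : G →ₗ[k] H) :
    H × G → Set (H × G) :=
  fun z => (A z.1 + {L' z.2}) ×ˢ ({-(L z.1)} + Binv z.2)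

/-- The block operator `(x, v) ↦ (W⁻¹ x − L* v, U⁻¹ v − L x)`, whose inverse is the preconditioner
of the algorithm; `L'` stands for the adjoint `L*`. -/
def primalDualMetric (W : H ≃ₗ[k] H) (U : G ≃ₗ[k] G) (L : H →ₗ[k] G) (L' : G →ₗ[k] H) :
    H × G →ₗ[k] H × G :=
  (W.symm.toLinearMap.coprod (-L')).prod ((-L).coprod U.symm.toLinearMap)

/-- The preconditioner `V (x, v) = (T x + W L* S v, S (L W x + v))` of the primal-dual algorithm,
meant for `T = (W⁻¹ − L* U L)⁻¹` and `S = (U⁻¹ − L W L*)⁻¹`; `L'` stands for the adjoint `L*`. -/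
def primalDualPreconditioner (W : H ≃ₗ[k] H) (L : H →ₗ[k] G) (L' : G →ₗ[k] H)
    (T : H ≃ₗ[k] H) (S : G ≃ₗ[k] G) : H × G →ₗ[k] H × G :=
  (T.toLinearMap.coprod (W.toLinearMap ∘ₗ L' ∘ₗ S.toLinearMap)).prod
    (S.toLinearMap ∘ₗ (L ∘ₗ W.toLinearMap).coprod LinearMap.id)

variable {W T : H ≃ₗ[k] H} {U S : G ≃ₗ[k] G} {L : H →ₗ[k] G} {L' : G →ₗ[k] H}

theorem primalDualMetric_apply (z : H × G) :
    primalDualMetric W U L L' z = (W.symm z.1 - L' z.2, U.symm z.2 - L z.1) := by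
  simp [primalDualMetric, sub_eq_add_neg, add_comm]

theorem primalDualPreconditioner_apply (z : H × G) :
    primalDualPreconditioner W L L' T S z = (T z.1 + W (L' (S z.2)), S (L (W z.1) + z.2)) := by
  simp [primalDualPreconditioner]

theorem exists_mem_primalDualOperator_iff {A : H → Set H} {Binv : G → Set G}
    {z : H × G} {P : H × G → Prop} :
    (∃ q ∈ primalDualOperator A Binv L L' z, P q) ↔
      ∃ a ∈ A z.1, ∃ b ∈ Binv z.2, P (a + L' z.2, -(L z.1) + b) := by
  simp only [primalDualOperator, Set.exists_prod_set, Set.add_singleton, Set.singleton_add,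
    Set.exists_mem_image]

theorem schur_inverse_push_through (hT : ∀ x, T.symm x = W.symm x - L' (U (L x)))
    (hS : ∀ v, S.symm v = U.symm v - L (W (L' v))) (v : G) :
    T (L' (U v)) = W (L' (S v)) := by
  rw [← T.eq_symm_apply, hT, W.symm_apply_apply]
  calc L' (U v) = L' (U (S.symm (S v))) := by rw [S.symm_apply_apply]
    _ = L' (S v) - L' (U (L (W (L' (S v))))) := by
      rw [hS, map_sub, map_sub, U.apply_symm_apply]

theorem primalDualPreconditioner_metric (hT : ∀ x, T.symm x = W.symm x - L' (U (L x)))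
    (hS : ∀ v, S.symm v = U.symm v - L (W (L' v))) (z : H × G) :
    primalDualPreconditioner W L L' T S (primalDualMetric W U L L' z) = z := by
  rw [primalDualMetric_apply, primalDualPreconditioner_apply]
  ext
  · calc T (W.symm z.1 - L' z.2) + W (L' (S (U.symm z.2 - L z.1)))
        = T (W.symm z.1 - L' z.2 + L' (U (U.symm z.2 - L z.1))) := by
          rw [← schur_inverse_push_through hT hS, ← map_add]
      _ = T (T.symm z.1) := by rw [hT, map_sub U, U.apply_symm_apply, map_sub L']; congr 1; abel
      _ = z.1 := T.apply_symm_apply _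
  · calc S (L (W (W.symm z.1 - L' z.2)) + (U.symm z.2 - L z.1))
        = S (S.symm z.2) := by rw [hS, map_sub W, W.apply_symm_apply, map_sub L]; congr 1; abel
      _ = z.2 := S.apply_symm_apply _

theorem primalDualMetric_preconditioner (hT : ∀ x, T.symm x = W.symm x - L' (U (L x)))
    (hS : ∀ v, S.symm v = U.symm v - L (W (L' v))) (z : H × G) :
    primalDualMetric W U L L' (primalDualPreconditioner W L L' T S z) = z := by
  have hSLW : S (L (W z.1)) = U (L (T z.1)) := schur_inverse_push_through hS hT z.1
  rw [primalDualPreconditioner_apply, primalDualMetric_apply]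
  ext
  · calc W.symm (T z.1 + W (L' (S z.2))) - L' (S (L (W z.1) + z.2))
        = W.symm (T z.1) - L' (U (L (T z.1))) := by
          simp only [map_add, W.symm_apply_apply, hSLW]; abel
      _ = z.1 := by rw [← hT, T.symm_apply_apply]
  · calc U.symm (S (L (W z.1) + z.2)) - L (T z.1 + W (L' (S z.2)))
        = U.symm (S z.2) - L (W (L' (S z.2))) := by
          simp only [map_add, hSLW, U.symm_apply_apply]; abel
      _ = z.2 := by rw [← hS, S.symm_apply_apply]

theorem primalDualPreconditioner_neg_mk (hT : ∀ x, T.symm x = W.symm x - L' (U (L x)))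
    (hS : ∀ v, S.symm v = U.symm v - L (W (L' v))) (c : H) (e : G) :
    primalDualPreconditioner W L L' T S (-c, e) = (T (L' (U e) - c), S (e - L (W c))) := by
  rw [primalDualPreconditioner_apply, ← schur_inverse_push_through hT hS, ← map_add]
  simp only [map_neg, neg_add_eq_sub]

theorem primalDualPreconditioner_resolvent_eq_iff
    (hT : ∀ x, T.symm x = W.symm x - L' (U (L x)))
    (hS : ∀ v, S.symm v = U.symm v - L (W (L' v))) {z p q r s : H × G} :
    z - primalDualPreconditioner W L L' T S r + primalDualPreconditioner W L L' T S s =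
        p + primalDualPreconditioner W L L' T S q ↔
      primalDualMetric W U L L' (z - p) = q + r - s := by
  have hzp : z - p = primalDualPreconditioner W L L' T S (q + r - s) ↔
      primalDualMetric W U L L' (z - p) = q + r - s :=
    ⟨fun h => by rw [h, primalDualMetric_preconditioner hT hS],
      fun h => by rw [← h, primalDualPreconditioner_metric hT hS]⟩
  rw [← hzp, map_sub, map_add, ← sub_eq_zero, ← sub_eq_zero (a := z - p)]
  exact Eq.congr_left (by abel)

theorem primal_update_iff {x y a d : H} {v : G} (u : G) :
    x - W (L' v + d) = y + W a ↔
      W.symm (x - y) - L' (v - u) = a + L' u + d := by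
  calc x - W (L' v + d) = y + W a
      ↔ x - y = W (a + (L' v + d)) := by
        rw [map_add W a, sub_eq_iff_eq_add, sub_eq_iff_eq_add', add_assoc]
    _ ↔ W.symm (x - y) = a + (L' v + d) := W.symm_apply_eq.symm
    _ ↔ W.symm (x - y) - L' (v - u) = a + L' u + d := by
        rw [sub_eq_iff_eq_add, map_sub L']
        exact Eq.congr_right (by abel)

theorem dual_update_iff {x y : H} {u v b d : G} :
    v + U (L ((2 : k) • y - x) - d) = u + U b ↔
      U.symm (v - u) - L (x - y) = -(L y) + b + d := by
  calc v + U (L ((2 : k) • y - x) - d) = u + U b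
      ↔ v - u = U (b - (L ((2 : k) • y - x) - d)) := by
        rw [map_sub U b, sub_eq_sub_iff_add_eq_add, add_comm (U b)]
    _ ↔ U.symm (v - u) = b - (L ((2 : k) • y - x) - d) := U.symm_apply_eq.symm
    _ ↔ U.symm (v - u) - L (x - y) = -(L y) + b + d := by
        rw [sub_eq_iff_eq_add, two_smul, map_sub L, map_sub L, map_add L]
        exact Eq.congr_right (by abel)

end PrimalDual

theorem stmt_8_general {k H G : Type*} [Ring k]
    [AddCommGroup H] [Module k H] [AddCommGroup G] [Module k G]
    (A : H → Set H) (Binv : G → Set G) (C : H → H) (Dinv : G → G)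
    (L : H →ₗ[k] G) (L' : G →ₗ[k] H) (W T : H ≃ₗ[k] H) (U S : G ≃ₗ[k] G)
    (hT : ∀ x, T.symm x = W.symm x - L' (U (L x)))
    (hS : ∀ v, S.symm v = U.symm v - L (W (L' v)))
    (x y c : H) (v u e : G) :
    ((∃ a ∈ A y, x - W (L' v + C x + c) = y + W a) ∧
        ∃ b ∈ Binv u, v + U (L ((2 : k) • y - x) - Dinv v + e) = u + U b) ↔
      ∃ q ∈ primalDualOperator A Binv L L' (y, u),
        (x, v) - primalDualPreconditioner W L L' T S (C x, Dinv v) +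
            (T (L' (U e) - c), S (e - L (W c))) =
          (y, u) + primalDualPreconditioner W L L' T S q := by
  have hprimal (a : H) : x - W (L' v + C x + c) = y + W a ↔
      W.symm (x - y) - L' (v - u) = a + L' u + (C x + c) := by
    rw [add_assoc, primal_update_iff u]
  have hdual (b : G) : v + U (L ((2 : k) • y - x) - Dinv v + e) = u + U b ↔
      U.symm (v - u) - L (x - y) = -(L y) + b + (Dinv v - e) := by
    rw [sub_add, dual_update_iff]
  simp only [hprimal, hdual, exists_mem_primalDualOperator_iff,
    ← primalDualPreconditioner_neg_mk hT hS, primalDualPreconditioner_resolvent_eq_iff hT hS,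
    primalDualMetric_apply, Prod.mk_sub_mk, Prod.mk_add_mk, Prod.mk.injEq, sub_neg_eq_add,
    ← add_sub_assoc, ← add_assoc]
  exact ⟨fun ⟨⟨a, ha, hy⟩, b, hb, hu⟩ => ⟨a, ha, b, hb, hy, hu⟩,
    fun ⟨a, ha, b, hb, hy, hu⟩ => ⟨⟨a, ha, hy⟩, b, hb, hu⟩⟩

/-- with `Q(x,v) = (Ax + L*v) × (−Lx + B⁻¹v)`, `R(x,v) = (Cx, D⁻¹v)` and `V` the
preconditioner of the first algorithm subclass, the point `(y, u)` computed by the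
primal-dual update is exactly `J_{VQ}(z − VRz + s)` for the stated error `s`. -/
theorem stmt_8
    {H : Type*} [NormedAddCommGroup H] [InnerProductSpace ℝ H] [CompleteSpace H]
    [TopologicalSpace.SeparableSpace H]
    {G : Type*} [NormedAddCommGroup G] [InnerProductSpace ℝ G] [CompleteSpace G]
    [TopologicalSpace.SeparableSpace G]
    (A : H → Set H) (hA : IsMaxMono A) (B : G → Set G) (hB : IsMaxMono B)
    (C : H → H) (D : G → Set G) (Dinv : G → G)
    (hDinv : ∀ u : G, {x : G | u ∈ D x} = {Dinv u})
    (L : H →L[ℝ] G)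
    (W Winv Whalf : H →L[ℝ] H) (U Uinv Uhalf : G →L[ℝ] G)
    (hW : IsSPSA W) (hU : IsSPSA U)
    (hWhalfSPSA : IsSPSA Whalf) (hUhalfSPSA : IsSPSA Uhalf)
    (hWhalf : ∀ x : H, Whalf (Whalf x) = W x) (hUhalf : ∀ v : G, Uhalf (Uhalf v) = U v)
    (hWinv : ∀ x : H, W (Winv x) = x) (hWinv' : ∀ x : H, Winv (W x) = x)
    (hUinv : ∀ v : G, U (Uinv v) = v) (hUinv' : ∀ v : G, Uinv (U v) = v)
    (hnorm : ‖Uhalf.comp (L.comp Whalf)‖ < 1)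
    -- `T` and `S` are the inverses of `W⁻¹ − L*UL` and `U⁻¹ − LWL*`
    (T : H →L[ℝ] H) (S : G →L[ℝ] G)
    (hT : ∀ x : H, (Winv - (ContinuousLinearMap.adjoint L).comp (U.comp L)) (T x) = x)
    (hT' : ∀ x : H, T ((Winv - (ContinuousLinearMap.adjoint L).comp (U.comp L)) x) = x)
    (hS : ∀ v : G, (Uinv - L.comp (W.comp (ContinuousLinearMap.adjoint L))) (S v) = v)
    (hS' : ∀ v : G, S ((Uinv - L.comp (W.comp (ContinuousLinearMap.adjoint L))) v) = v)
    (V : WithLp 2 (H × G) →L[ℝ] WithLp 2 (H × G))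
    (hV1 : ∀ z : WithLp 2 (H × G),
      (WithLp.equiv 2 (H × G) (V z)).1
        = T (WithLp.equiv 2 (H × G) z).1
            + W (ContinuousLinearMap.adjoint L (S (WithLp.equiv 2 (H × G) z).2)))
    (hV2 : ∀ z : WithLp 2 (H × G),
      (WithLp.equiv 2 (H × G) (V z)).2
        = S (L (W (WithLp.equiv 2 (H × G) z).1) + (WithLp.equiv 2 (H × G) z).2))
    (R : WithLp 2 (H × G) → WithLp 2 (H × G))
    (hR : ∀ z : WithLp 2 (H × G),
      R z = (WithLp.equiv 2 (H × G)).symm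
        (C (WithLp.equiv 2 (H × G) z).1, Dinv (WithLp.equiv 2 (H × G) z).2))
    -- the fixed points and errors
    (x : H) (v : G) (c : H) (e : G)
    -- `y = J_{WA}(x − W(L*v + Cx + c))`, characterized through the inclusion
    (y : H) (hy : ∃ a ∈ A y, x - W (ContinuousLinearMap.adjoint L v + C x + c) = y + W a)
    -- `u = J_{UB⁻¹}(v + U(L(2y − x) − D⁻¹v + e))`
    (u : G) (hu : ∃ b ∈ svInv B u,
      v + U (L ((2 : ℝ) • y - x) - Dinv v + e) = u + U b) :
    -- conclusion: `(y,u) = J_{VQ}(z − VRz + s)`, i.e. `z − VRz + s ∈ (y,u) + V(Q(y,u))`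
    ∃ qq : WithLp 2 (H × G),
      (WithLp.equiv 2 (H × G) qq).1 ∈ A y + {ContinuousLinearMap.adjoint L u} ∧
      (WithLp.equiv 2 (H × G) qq).2 ∈ {-(L y)} + svInv B u ∧
      (WithLp.equiv 2 (H × G)).symm (x, v)
          - V (R ((WithLp.equiv 2 (H × G)).symm (x, v)))
          + (WithLp.equiv 2 (H × G)).symm
              (T (ContinuousLinearMap.adjoint L (U e) - c), S (e - L (W c)))
        = (WithLp.equiv 2 (H × G)).symm (y, u) + V qq := by
  let Weq : H ≃ₗ[ℝ] H := .ofLinearMap W Winv (LinearMap.ext hWinv) (LinearMap.ext hWinv')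
  let Ueq : G ≃ₗ[ℝ] G := .ofLinearMap U Uinv (LinearMap.ext hUinv) (LinearMap.ext hUinv')
  let Teq : H ≃ₗ[ℝ] H := .ofLinearMap T (Winv - (ContinuousLinearMap.adjoint L).comp (U.comp L))
    (LinearMap.ext hT') (LinearMap.ext hT)
  let Seq : G ≃ₗ[ℝ] G := .ofLinearMap S (Uinv - L.comp (W.comp (ContinuousLinearMap.adjoint L)))
    (LinearMap.ext hS') (LinearMap.ext hS)
  have hV (z : H × G) :
      (V (WithLp.toLp 2 z)).ofLp =
        primalDualPreconditioner Weq L (ContinuousLinearMap.adjoint L) Teq Seq z := by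
    rw [primalDualPreconditioner_apply]
    exact Prod.ext (hV1 (.toLp 2 z)) (hV2 (.toLp 2 z))
  obtain ⟨q, ⟨hq₁, hq₂⟩, hq⟩ := (stmt_8_general A (svInv B) C Dinv L
    (ContinuousLinearMap.adjoint L) Weq Teq Ueq Seq (fun _ => rfl) (fun _ => rfl)
    x y c v u e).mp ⟨hy, hu⟩
  refine ⟨WithLp.toLp 2 q, hq₁, hq₂, (WithLp.equiv 2 (H × G)).injective ?_⟩
  simp only [hR, WithLp.equiv_apply, WithLp.equiv_symm_apply, WithLp.ofLp_add, WithLp.ofLp_sub, hV]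
  exact hq
end

section
/- Let H and G be separable real Hilbert spaces, let L ∈ B(H, G), and let W ∈ B(H), U ∈ B(G) be strongly positive self-adjoint with ‖U^{1/2} L W^{1/2}‖ < 1. Then: (i) the operator V: H ⊕ G → H ⊕ G: (x, v) ↦ (W x, (U^{-1} − L W L*)^{-1} v) is a strongly positive self-adjoint bounded operator; (ii) if moreover C: H → H is such that W^{1/2} C W^{1/2} is μ-cocoercive (μ > 0), D: G → 2^G has single-valued inverse D^{-1}: G → G with U^{1/2} D^{-1} U^{1/2} ν-cocoercive (ν > 0), and R(x, v) = (C x, D^{-1} v), then V^{1/2} R V^{1/2} is ϑ-cocoercive with ϑ = min{ μ, ν (1 − ‖U^{1/2} L W^{1/2}‖²) }. -/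
open scoped RealInnerProductSpace

/-!
Write `P = W^{1/2}`, `Q = U^{1/2}`, `T = Q L P`, `s = 1 - ‖T‖²` and `A = U⁻¹ - L W L*`. Since
`‖P L* Q w‖ = ‖T* w‖ ≤ ‖T‖ ‖w‖`, putting `w = Q U⁻¹ x` gives `L W L* ≤ ‖T‖² U⁻¹` in the Loewner
order, that is `s U⁻¹ ≤ A`. Hence `A` is strongly positive and, inversion being antitone,
`s A⁻¹ ≤ U`. For self-adjoint `P` with `P² = W`, cocoercivity of `P C P` is a statement about `C`
and the quadratic form of `W` only, and it is antitone in `W`; so the cocoercivity of `Q D⁻¹ Q`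
passes from `U` to `s A⁻¹`.
-/

open ContinuousLinearMap

section LoewnerOrder

variable {K : Type*} [NormedAddCommGroup K] [InnerProductSpace ℝ K] {A B A' B' : K →L[ℝ] K}

lemma le_iff_forall_inner_le (hA : A.IsSymmetric) (hB : B.IsSymmetric) :
    A ≤ B ↔ ∀ x, ⟪x, A x⟫ ≤ ⟪x, B x⟫ := by
  have hBA : (B - A).IsSymmetric := hB.sub hA
  simp only [le_def, isPositive_iff, hBA, true_and, sub_apply, inner_sub_left, sub_nonneg,
    real_inner_comm]

lemma inner_le_inner_of_le (h : A ≤ B) (x : K) : ⟪x, A x⟫ ≤ ⟪x, B x⟫ := by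
  simpa only [sub_apply, inner_sub_right, sub_nonneg] using h.inner_nonneg_right x

lemma smul_le_smul_of_le {c : ℝ} (hc : 0 ≤ c) (h : A ≤ B) : c • A ≤ c • B := by
  simpa only [le_def, smul_sub] using IsPositive.smul_of_nonneg h hc

lemma smul_le_smul_of_isPositive {c d : ℝ} (hcd : c ≤ d) (hA : A.IsPositive) :
    c • A ≤ d • A := by
  simpa only [le_def, sub_smul] using hA.smul_of_nonneg (sub_nonneg.2 hcd)

lemma isSymmetric_smul (c : ℝ) (hA : A.IsSymmetric) : (c • A).IsSymmetric :=
  LinearMap.IsSymmetric.smul (conj_trivial c) hA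

lemma isSymmetric_of_mul_eq_one (hA : A.IsSymmetric) (h : A * A' = 1) : A'.IsSymmetric := by
  have hAA' (x : K) : A (A' x) = x := congr($h x)
  intro x y
  simpa only [coe_coe, hAA'] using (hA (A' x) (A' y)).symm

/-- The inequality of quadratic forms is `0 ≤ ⟪a - b, B (a - b)⟫` for `a = A' x`, `b = B' x`. -/
lemma le_of_mul_eq_one_of_le (hB : B.IsPositive) (hBA : B ≤ A) (hA' : A * A' = 1)
    (hB' : B * B' = 1) : A' ≤ B' := by
  have hA : A.IsSymmetric := by simpa using hBA.isSymmetric.add hB.isSymmetric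
  rw [le_iff_forall_inner_le (isSymmetric_of_mul_eq_one hA hA')
    (isSymmetric_of_mul_eq_one hB.isSymmetric hB')]
  intro x
  have hAx : A (A' x) = x := congr($hA' x)
  have hBx : B (B' x) = x := congr($hB' x)
  have hcross : ⟪B' x, B (A' x)⟫ = ⟪x, A' x⟫ := by
    rw [← hB.inner_left_eq_inner_right, hBx]
  have hsq := hB.inner_nonneg_right (A' x - B' x)
  have hle := inner_le_inner_of_le hBA (A' x)
  simp only [map_sub, inner_sub_left, inner_sub_right, hAx, hBx, hcross,
    real_inner_comm x] at hsq hle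
  linarith

lemma le_smul_one_of_norm_le (hA : A.IsSymmetric) {c : ℝ} (hc : ‖A‖ ≤ c) : A ≤ c • 1 := by
  refine (le_iff_forall_inner_le hA (isSymmetric_smul c .one)).2 fun x => ?_
  calc ⟪x, A x⟫ ≤ ‖x‖ * ‖A x‖ := real_inner_le_norm x (A x)
    _ ≤ ‖x‖ * (c * ‖x‖) := by gcongr; exact A.le_of_opNorm_le hc x
    _ = c * ‖x‖ ^ 2 := by ring
    _ = ⟪x, (c • 1 : K →L[ℝ] K) x⟫ := by simp [inner_smul_right]

end LoewnerOrder

section StronglyPositive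

variable {K : Type*} [NormedAddCommGroup K] [InnerProductSpace ℝ K] {A B V : K →L[ℝ] K}

lemma isSPSA_iff_exists_smul_one_le : IsSPSA V ↔ ∃ α : ℝ, 0 < α ∧ α • 1 ≤ V := by
  have hone (α : ℝ) : (α • 1 : K →L[ℝ] K).IsSymmetric := isSymmetric_smul α .one
  constructor
  · rintro ⟨hV, α, hα, h⟩
    refine ⟨α, hα, (le_iff_forall_inner_le (hone α) hV).2 fun x => ?_⟩
    simpa [inner_smul_right] using h x
  · rintro ⟨α, hα, h⟩
    have hV : V.IsSymmetric := by simpa using h.isSymmetric.add (hone α)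
    refine ⟨hV, α, hα, fun x => ?_⟩
    simpa [inner_smul_right] using inner_le_inner_of_le h x

namespace IsSPSA

lemma isPositive (hV : IsSPSA V) : V.IsPositive := by
  obtain ⟨hsymm, α, hα, h⟩ := hV
  refine (isPositive_iff V).2 ⟨hsymm, fun x => ?_⟩
  rw [real_inner_comm]
  exact le_trans (by positivity) (h x)

lemma isSelfAdjoint [CompleteSpace K] (hV : IsSPSA V) : IsSelfAdjoint V :=
  hV.isPositive.isSelfAdjoint

lemma of_le (hA : IsSPSA A) (hAB : A ≤ B) : IsSPSA B := by
  rw [isSPSA_iff_exists_smul_one_le] at hA ⊢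
  obtain ⟨α, hα, h⟩ := hA
  exact ⟨α, hα, h.trans hAB⟩

lemma smul {c : ℝ} (hc : 0 < c) (hA : IsSPSA A) : IsSPSA (c • A) := by
  rw [isSPSA_iff_exists_smul_one_le] at hA ⊢
  obtain ⟨α, hα, h⟩ := hA
  exact ⟨c * α, mul_pos hc hα, by simpa only [mul_smul] using smul_le_smul_of_le hc.le h⟩

lemma isUnit [CompleteSpace K] (hA : IsSPSA A) : IsUnit A := by
  obtain ⟨-, α, hα, h⟩ := hA
  refine isUnit_of_forall_le_norm_inner_map A (c := ⟨α, hα.le⟩) hα fun x => ?_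
  rw [real_inner_comm, mul_comm]
  exact (h x).trans (le_abs_self _)

lemma surjective [CompleteSpace K] (hA : IsSPSA A) : Function.Surjective A :=
  (isUnit_iff_bijective.1 hA.isUnit).2

lemma of_mul_eq_one (hA : IsSPSA A) (h : A * B = 1) : IsSPSA B := by
  have hc : 0 < ‖A‖ + 1 := by positivity
  refine isSPSA_iff_exists_smul_one_le.2 ⟨(‖A‖ + 1)⁻¹, inv_pos.2 hc, ?_⟩
  have hle : A ≤ (‖A‖ + 1) • 1 := le_smul_one_of_norm_le hA.1 (by linarith)
  refine le_of_mul_eq_one_of_le hA.isPositive hle ?_ h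
  rw [smul_mul_smul_comm, mul_inv_cancel₀ hc.ne', one_smul, mul_one]

end IsSPSA

end StronglyPositive

section SchurComplement

variable {H G : Type*} [NormedAddCommGroup H] [InnerProductSpace ℝ H] [CompleteSpace H]
  [NormedAddCommGroup G] [InnerProductSpace ℝ G] [CompleteSpace G]
  (L : H →L[ℝ] G) {W P : H →L[ℝ] H} {U Uinv Q S : G →L[ℝ] G}

lemma conj_adjoint_le_norm_sq_smul (hP : IsSelfAdjoint P) (hPW : P * P = W)
    (hQ : IsSelfAdjoint Q) (hQU : Q * Q = U) (hUinv : U * Uinv = 1) :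
    L ∘L W ∘L adjoint L ≤ ‖Q ∘L L ∘L P‖ ^ 2 • Uinv := by
  subst hPW hQU
  set T : H →L[ℝ] G := Q ∘L L ∘L P with hT
  have hUinv_symm : Uinv.IsSymmetric :=
    isSymmetric_of_mul_eq_one ((hQ.commute_iff hQ).1 (.refl Q)).isSymmetric hUinv
  have hLWL_symm : (L ∘L (P * P) ∘L adjoint L).IsSymmetric :=
    (((hP.commute_iff hP).1 (.refl P)).conj_adjoint L).isSymmetric
  refine (le_iff_forall_inner_le hLWL_symm (isSymmetric_smul _ hUinv_symm)).2 fun x => ?_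
  set w : G := Q (Uinv x)
  have hQw : Q w = x := congr($hUinv x)
  have hw : ‖w‖ ^ 2 = ⟪x, Uinv x⟫ := by
    rw [← real_inner_self_eq_norm_sq, ← hQ.isSymmetric.apply_clm, hQw]
  have hTw : adjoint T w = P (adjoint L x) := by
    simp [hT, adjoint_comp, hP.adjoint_eq, hQ.adjoint_eq, hQw]
  calc ⟪x, (L ∘L (P * P) ∘L adjoint L) x⟫ = ‖adjoint T w‖ ^ 2 := by
        rw [hTw, ← real_inner_self_eq_norm_sq, hP.isSymmetric.apply_clm, adjoint_inner_left]; rfl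
    _ ≤ (‖T‖ * ‖w‖) ^ 2 := by
        gcongr
        simpa using (adjoint T).le_opNorm w
    _ = ⟪x, (‖T‖ ^ 2 • Uinv) x⟫ := by rw [mul_pow, hw, smul_apply, inner_smul_right]

lemma one_sub_norm_sq_smul_le_sub (hP : IsSelfAdjoint P) (hPW : P * P = W)
    (hQ : IsSelfAdjoint Q) (hQU : Q * Q = U) (hUinv : U * Uinv = 1) :
    (1 - ‖Q ∘L L ∘L P‖ ^ 2) • Uinv ≤ Uinv - L ∘L W ∘L adjoint L := by
  have h := conj_adjoint_le_norm_sq_smul L hP hPW hQ hQU hUinv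
  rw [le_def] at h ⊢
  convert! h using 1
  rw [sub_smul, one_smul]
  abel

lemma isSPSA_sub_conj_adjoint (hP : IsSelfAdjoint P) (hPW : P * P = W) (hU : IsSPSA U)
    (hQ : IsSelfAdjoint Q) (hQU : Q * Q = U) (hUinv : U * Uinv = 1)
    (hnorm : ‖Q ∘L L ∘L P‖ < 1) : IsSPSA (Uinv - L ∘L W ∘L adjoint L) :=
  have hs : 0 < 1 - ‖Q ∘L L ∘L P‖ ^ 2 :=
    sub_pos.2 (pow_lt_one₀ (norm_nonneg _) hnorm two_ne_zero)
  ((hU.of_mul_eq_one hUinv).smul hs).of_le (one_sub_norm_sq_smul_le_sub L hP hPW hQ hQU hUinv)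

lemma one_sub_norm_sq_smul_le_of_sub_mul_eq_one (hP : IsSelfAdjoint P) (hPW : P * P = W)
    (hU : IsSPSA U) (hQ : IsSelfAdjoint Q) (hQU : Q * Q = U) (hUinv : U * Uinv = 1)
    (hnorm : ‖Q ∘L L ∘L P‖ < 1) (hS : (Uinv - L ∘L W ∘L adjoint L) * S = 1) :
    (1 - ‖Q ∘L L ∘L P‖ ^ 2) • S ≤ U := by
  set s : ℝ := 1 - ‖Q ∘L L ∘L P‖ ^ 2
  have hs : 0 < s := sub_pos.2 (pow_lt_one₀ (norm_nonneg _) hnorm two_ne_zero)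
  have hUinv_spsa : IsSPSA Uinv := hU.of_mul_eq_one hUinv
  have hUinv_mul : Uinv * U = 1 := by
    rw [← ((hU.isSelfAdjoint.commute_iff hUinv_spsa.isSelfAdjoint).2 (hUinv ▸ .one _)).eq, hUinv]
  have hle : S ≤ s⁻¹ • U := by
    refine le_of_mul_eq_one_of_le (hUinv_spsa.smul hs).isPositive
      (one_sub_norm_sq_smul_le_sub L hP hPW hQ hQU hUinv) hS ?_
    rw [smul_mul_smul_comm, mul_inv_cancel₀ hs.ne', one_smul, hUinv_mul]
  simpa only [smul_inv_smul₀ hs.ne'] using smul_le_smul_of_le hs.le hle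

end SchurComplement

section Cocoercive

variable {K : Type*} [NormedAddCommGroup K] [InnerProductSpace ℝ K]
  {V V' P : K →L[ℝ] K} {β β' : ℝ} {B : K → K}

/-- `β`-cocoercivity of `B` with `‖·‖²` replaced, on the increments of `B`, by the quadratic form
of `V`. It describes the cocoercivity of `V^{1/2} B V^{1/2}` without mentioning a square root. -/
def CocoerciveWrt (V : K →L[ℝ] K) (β : ℝ) (B : K → K) : Prop :=
  ∀ x y : K, β * ⟪B x - B y, V (B x - B y)⟫ ≤ ⟪x - y, B x - B y⟫

lemma CocoerciveWrt.of_smul_le (hB : CocoerciveWrt V β B) (h : β' • V' ≤ β • V) :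
    CocoerciveWrt V' β' B := fun x y => by
  have hle := inner_le_inner_of_le h (B x - B y)
  simp only [smul_apply, inner_smul_right] at hle
  exact hle.trans (hB x y)

lemma cocoercive_conj_iff (hP : P.IsSymmetric) (hPV : P * P = V) :
    Cocoercive β (fun x => P (B (P x))) ↔
      ∀ x y, β * ⟪B (P x) - B (P y), V (B (P x) - B (P y))⟫ ≤
        ⟪P x - P y, B (P x) - B (P y)⟫ := by
  subst hPV
  simp only [Cocoercive, ← map_sub, ← real_inner_self_eq_norm_sq, hP.apply_clm, mul_apply_eq_comp]

lemma CocoerciveWrt.conj (hP : P.IsSymmetric) (hPV : P * P = V) (hB : CocoerciveWrt V β B) :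
    Cocoercive β (fun x => P (B (P x))) :=
  (cocoercive_conj_iff hP hPV).2 fun x y => hB (P x) (P y)

lemma Cocoercive.of_conj (hP : P.IsSymmetric) (hPV : P * P = V) (hV : Function.Surjective V)
    (hB : Cocoercive β (fun x => P (B (P x)))) : CocoerciveWrt V β B := by
  have hPsurj : Function.Surjective P := .of_comp (show Function.Surjective (P * P) by rwa [hPV])
  exact hPsurj.forall₂.2 ((cocoercive_conj_iff hP hPV).1 hB)

end Cocoercive

section L2Prod

variable {H G : Type*} [NormedAddCommGroup H] [InnerProductSpace ℝ H]
  [NormedAddCommGroup G] [InnerProductSpace ℝ G]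

/-- The diagonal operator `(x, v) ↦ (W x, S v)` on the Hilbert direct sum `H ⊕ G`. -/
noncomputable def l2ProdMap (W : H →L[ℝ] H) (S : G →L[ℝ] G) :
    WithLp 2 (H × G) →L[ℝ] WithLp 2 (H × G) :=
  (WithLp.prodContinuousLinearEquiv 2 ℝ H G).symm ∘L W.prodMap S ∘L
    (WithLp.prodContinuousLinearEquiv 2 ℝ H G : WithLp 2 (H × G) →L[ℝ] H × G)

variable {W : H →L[ℝ] H} {S : G →L[ℝ] G}

lemma inner_l2ProdMap (y z : WithLp 2 (H × G)) :
    ⟪y, l2ProdMap W S z⟫ = ⟪y.fst, W z.fst⟫ + ⟪y.snd, S z.snd⟫ := rfl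

lemma eq_l2ProdMap {V : WithLp 2 (H × G) →L[ℝ] WithLp 2 (H × G)}
    (h₁ : ∀ z, (V z).fst = W z.fst) (h₂ : ∀ z, (V z).snd = S z.snd) : V = l2ProdMap W S :=
  ContinuousLinearMap.ext fun z => WithLp.ofLp_injective 2 (Prod.ext (h₁ z) (h₂ z))

lemma IsSPSA.l2ProdMap (hW : IsSPSA W) (hS : IsSPSA S) : IsSPSA (l2ProdMap W S) := by
  obtain ⟨hW_symm, α, hα, hαW⟩ := hW
  obtain ⟨hS_symm, γ, hγ, hγS⟩ := hS
  refine ⟨fun y z => congrArg₂ (· + ·) (hW_symm _ _) (hS_symm _ _),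
    min α γ, lt_min hα hγ, fun z => ?_⟩
  rw [inner_l2ProdMap, WithLp.prod_norm_sq_eq_of_L2, mul_add]
  gcongr
  · exact le_trans (by gcongr; exact min_le_left α γ) (hαW z.fst)
  · exact le_trans (by gcongr; exact min_le_right α γ) (hγS z.snd)

lemma CocoerciveWrt.l2ProdMap {β : ℝ} {C : H → H} {B : G → G} (hC : CocoerciveWrt W β C)
    (hB : CocoerciveWrt S β B) :
    CocoerciveWrt (l2ProdMap W S) β (WithLp.map 2 (Prod.map C B)) := fun y z => by
  rw [inner_l2ProdMap, mul_add]
  exact add_le_add (hC y.fst z.fst) (hB y.snd z.snd)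

end L2Prod

theorem stmt_12_general
    {H : Type*} [NormedAddCommGroup H] [InnerProductSpace ℝ H] [CompleteSpace H]
    {G : Type*} [NormedAddCommGroup G] [InnerProductSpace ℝ G] [CompleteSpace G]
    (L : H →L[ℝ] G) {W Whalf : H →L[ℝ] H} {U Uinv Uhalf : G →L[ℝ] G}
    (hW : IsSPSA W) (hU : IsSPSA U)
    (hWhalf_sa : IsSelfAdjoint Whalf) (hUhalf_sa : IsSelfAdjoint Uhalf)
    (hWhalf : Whalf * Whalf = W) (hUhalf : Uhalf * Uhalf = U) (hUinv : U * Uinv = 1)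
    (hnorm : ‖Uhalf ∘L L ∘L Whalf‖ < 1) :
    (∃ S : G →L[ℝ] G,
      (Uinv - L ∘L W ∘L adjoint L) * S = 1 ∧ S * (Uinv - L ∘L W ∘L adjoint L) = 1 ∧
      IsSPSA (l2ProdMap W S)) ∧
    (∀ S : G →L[ℝ] G, (Uinv - L ∘L W ∘L adjoint L) * S = 1 →
      ∀ Vhalf : WithLp 2 (H × G) →L[ℝ] WithLp 2 (H × G),
        IsSelfAdjoint Vhalf → Vhalf * Vhalf = l2ProdMap W S →
        ∀ (C : H → H) (Dinv : G → G) (μ ν : ℝ), 0 ≤ ν →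
          Cocoercive μ (fun x => Whalf (C (Whalf x))) →
          Cocoercive ν (fun v => Uhalf (Dinv (Uhalf v))) →
          Cocoercive (min μ (ν * (1 - ‖Uhalf ∘L L ∘L Whalf‖ ^ 2)))
            (fun z => Vhalf (WithLp.map 2 (Prod.map C Dinv) (Vhalf z)))) := by
  have hA : IsSPSA (Uinv - L ∘L W ∘L adjoint L) :=
    isSPSA_sub_conj_adjoint L hWhalf_sa hWhalf hU hUhalf_sa hUhalf hUinv hnorm
  constructor
  · obtain ⟨S, hAS, hSA⟩ := isUnit_iff_exists.1 hA.isUnit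
    exact ⟨S, hAS, hSA, hW.l2ProdMap (hA.of_mul_eq_one hAS)⟩
  intro S hAS Vhalf hVhalf_sa hVhalf C Dinv μ ν hν hC hD
  have hC' : CocoerciveWrt W μ C := hC.of_conj hWhalf_sa.isSymmetric hWhalf hW.surjective
  have hD' : CocoerciveWrt U ν Dinv := hD.of_conj hUhalf_sa.isSymmetric hUhalf hU.surjective
  set s : ℝ := 1 - ‖Uhalf ∘L L ∘L Whalf‖ ^ 2
  have hSU : s • S ≤ U := one_sub_norm_sq_smul_le_of_sub_mul_eq_one L hWhalf_sa hWhalf hU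
    hUhalf_sa hUhalf hUinv hnorm hAS
  have hϑS : min μ (ν * s) • S ≤ ν • U := calc
    min μ (ν * s) • S ≤ (ν * s) • S :=
      smul_le_smul_of_isPositive (min_le_right _ _) (hA.of_mul_eq_one hAS).isPositive
    _ = ν • s • S := mul_smul ν s S
    _ ≤ ν • U := smul_le_smul_of_le hν hSU
  have hϑW : min μ (ν * s) • W ≤ μ • W :=
    smul_le_smul_of_isPositive (min_le_left _ _) hW.isPositive
  exact ((hC'.of_smul_le hϑW).l2ProdMap (hD'.of_smul_le hϑS)).conj hVhalf_sa.isSymmetric hVhalf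

/-- (i) the operator `V : (x,v) ↦ (Wx, (U⁻¹ − LWL*)⁻¹v)` is a strongly
positive self-adjoint bounded operator on `H ⊕ G`; (ii) if `W^{1/2} C W^{1/2}` is
`μ`-cocoercive and `U^{1/2} D⁻¹ U^{1/2}` is `ν`-cocoercive and `R(x,v) = (Cx, D⁻¹v)`, then
`V^{1/2} R V^{1/2}` is `ϑ`-cocoercive with `ϑ = min{μ, ν(1 − ‖U^{1/2}LW^{1/2}‖²)}`. -/
theorem stmt_12
    {H : Type*} [NormedAddCommGroup H] [InnerProductSpace ℝ H] [CompleteSpace H]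
    [TopologicalSpace.SeparableSpace H]
    {G : Type*} [NormedAddCommGroup G] [InnerProductSpace ℝ G] [CompleteSpace G]
    [TopologicalSpace.SeparableSpace G]
    (L : H →L[ℝ] G)
    (W Winv Whalf : H →L[ℝ] H) (U Uinv Uhalf : G →L[ℝ] G)
    (hW : IsSPSA W) (hU : IsSPSA U)
    (hWhalfSPSA : IsSPSA Whalf) (hUhalfSPSA : IsSPSA Uhalf)
    (hWhalf : ∀ x : H, Whalf (Whalf x) = W x) (hUhalf : ∀ v : G, Uhalf (Uhalf v) = U v)
    (hWinv : ∀ x : H, W (Winv x) = x) (hWinv' : ∀ x : H, Winv (W x) = x)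
    (hUinv : ∀ v : G, U (Uinv v) = v) (hUinv' : ∀ v : G, Uinv (U v) = v)
    (hnorm : ‖Uhalf.comp (L.comp Whalf)‖ < 1) :
    (∃ S : G →L[ℝ] G,
      (∀ v : G, (Uinv - L.comp (W.comp (ContinuousLinearMap.adjoint L))) (S v) = v) ∧
      (∀ v : G, S ((Uinv - L.comp (W.comp (ContinuousLinearMap.adjoint L))) v) = v) ∧
      ∃ V : WithLp 2 (H × G) →L[ℝ] WithLp 2 (H × G),
        (∀ z : WithLp 2 (H × G),
          (WithLp.equiv 2 (H × G) (V z)).1 = W (WithLp.equiv 2 (H × G) z).1) ∧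
        (∀ z : WithLp 2 (H × G),
          (WithLp.equiv 2 (H × G) (V z)).2 = S (WithLp.equiv 2 (H × G) z).2) ∧
        IsSPSA V) ∧
    (∀ S : G →L[ℝ] G,
      (∀ v : G, (Uinv - L.comp (W.comp (ContinuousLinearMap.adjoint L))) (S v) = v) →
      (∀ v : G, S ((Uinv - L.comp (W.comp (ContinuousLinearMap.adjoint L))) v) = v) →
      ∀ V Vhalf : WithLp 2 (H × G) →L[ℝ] WithLp 2 (H × G),
        (∀ z : WithLp 2 (H × G),
          (WithLp.equiv 2 (H × G) (V z)).1 = W (WithLp.equiv 2 (H × G) z).1) →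
        (∀ z : WithLp 2 (H × G),
          (WithLp.equiv 2 (H × G) (V z)).2 = S (WithLp.equiv 2 (H × G) z).2) →
        IsSPSA Vhalf → (∀ z, Vhalf (Vhalf z) = V z) →
        ∀ (C : H → H) (D : G → Set G) (Dinv : G → G),
          (∀ u : G, {x : G | u ∈ D x} = {Dinv u}) →
          ∀ μ ν : ℝ, 0 < μ → 0 < ν →
            Cocoercive μ (fun x => Whalf (C (Whalf x))) →
            Cocoercive ν (fun v => Uhalf (Dinv (Uhalf v))) →
            ∀ R : WithLp 2 (H × G) → WithLp 2 (H × G),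
              (∀ z : WithLp 2 (H × G),
                R z = (WithLp.equiv 2 (H × G)).symm
                  (C (WithLp.equiv 2 (H × G) z).1, Dinv (WithLp.equiv 2 (H × G) z).2)) →
              Cocoercive
                (min μ (ν * (1 - ‖Uhalf.comp (L.comp Whalf)‖ ^ 2)))
                (fun z => Vhalf (R (Vhalf z)))) := by
  obtain ⟨⟨S, hAS, hSA, hV⟩, hR⟩ := stmt_12_general L hW hU hWhalfSPSA.isSelfAdjoint
    hUhalfSPSA.isSelfAdjoint (ContinuousLinearMap.ext hWhalf) (ContinuousLinearMap.ext hUhalf)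
    (ContinuousLinearMap.ext hUinv) hnorm
  refine ⟨⟨S, fun v => congr($hAS v), fun v => congr($hSA v), l2ProdMap W S, fun _ => rfl,
    fun _ => rfl, hV⟩, ?_⟩
  intro S hAS _ V Vhalf hV₁ hV₂ hVhalfSPSA hVhalf C _ Dinv _ μ ν _ hν hC hD R hRz
  obtain rfl : R = WithLp.map 2 (Prod.map C Dinv) := funext hRz
  exact hR S (ContinuousLinearMap.ext hAS) Vhalf hVhalfSPSA.isSelfAdjoint
    ((ContinuousLinearMap.ext hVhalf).trans (eq_l2ProdMap hV₁ hV₂)) C Dinv μ ν hν.le hC hD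
end
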